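/- arXiv:2008.01121 — 2 statements merged into one kernel-verified Lean document; each statement's English description precedes it below -/
import Mathlib

section
/- Let Q be a polyhedron in V, F a face of Q, and v ∈ V. Then the tight containment indicator function tc_{C_F(Q)+v} : Def⁺(Q) → ℤ, defined by tc_{C_F(Q)+v}(P) = 1 if C_F(Q) + v tightly contains P and tc_{C_F(Q)+v}(P) = 0 otherwise, is valuative. -/
/-!
Let `C = tanCone Q F`, `N = normCone Q F`, `L = lineal C`, and let `y` be a vector exposing `F` in `Q`.

*Reduction to one functional.* Averaging points of `F` gives a point of `F` at which only the
inequalities tight on all of `F` are tight, so `C` is the polar of `N` (`mem_tanCone_iff`) and `L` is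
the orthogonal complement of `N`. If `P` is an extended deformation of `Q` that meets `v + L` and
satisfies `⟪y, x⟫ ≤ ⟪y, v⟫` on `P`, then `y` lies in the normal cone of the face of `P` it exposes,
hence in a normal cone `normCone Q G` contained in that one. Then `G ⊆ F`, so `N` is contained in the
normal cone of the face of `P`, which forces `P ⊆ v + C`. Thus `v + C` tightly contains `P` iff `P`
meets `v + L` and `⟪y, ·⟫ ≤ ⟪y, v⟫` on `P` (`tightContains_iff`).

*Euler characteristic.* If `∑ aᵢ 1_{Rᵢ} = 0` with `Rᵢ` compact convex, then `∑ aᵢ [Rᵢ ≠ ∅] = 0`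
(`euler_compact`): in dimension one `[R ≠ ∅]` is a sum of jumps `1_R(t) - 1_R(t + ε)`, and the general
case follows by projecting away one coordinate at a time.

*Conclusion.* After cutting with a large ball all sets are compact. For `0 < ε ≪ δ ≪ 1`, the sets `P`
that meet `A = v + L` and contain a point with `⟪y, x⟫ > ⟪y, v⟫` are exactly those meeting the slice
`⟪y, x⟫ = ⟪y, v⟫ + ε` of the closed `δ`-neighbourhood of `A`. So the tight containment indicator is
`[P ∩ A ≠ ∅]` minus the indicator of meeting this slice, and both are handled by the Euler
characteristic.
-/

open RealInnerProductSpace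

noncomputable def indic {V : Type*} (P : Set V) : V → ℤ := P.indicator 1

noncomputable def iv (p : Prop) : ℤ := @ite _ p (Classical.propDecidable p) 1 0

def Valuative {V A : Type*} [AddCommGroup A] (Fam : Set (Set V)) (f : Set V → A) : Prop :=
  ∀ (k : ℕ) (a : Fin k → ℤ) (P : Fin k → Set V),
    (∀ i, P i ∈ Fam) → (∑ i, a i • indic (P i)) = 0 → (∑ i, a i • f (P i)) = 0

variable {V : Type*} [NormedAddCommGroup V] [InnerProductSpace ℝ V] [FiniteDimensional ℝ V]

def IsPolyhedron (P : Set V) : Prop :=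
  P.Nonempty ∧ ∃ s : Finset (V × ℝ), P = {x | ∀ p ∈ s, ⟪p.1, x⟫ ≤ p.2}

def IsFace (Q F : Set V) : Prop :=
  ∃ y : V, F.Nonempty ∧ F = {x | x ∈ Q ∧ ∀ q ∈ Q, ⟪y, q⟫ ≤ ⟪y, x⟫}

def IsConvexCone (C : Set V) : Prop :=
  (0 : V) ∈ C ∧ Convex ℝ C ∧ ∀ c : ℝ, 0 ≤ c → ∀ x ∈ C, c • x ∈ C

def coneGen (S : Set V) : Set V := ⋂₀ {C : Set V | IsConvexCone C ∧ S ⊆ C}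

def tanCone (Q F : Set V) : Set V := coneGen {d | ∃ q ∈ Q, ∃ v ∈ F, d = q - v}

def normCone (Q F : Set V) : Set V := {y | ∀ v ∈ F, ∀ q ∈ Q, ⟪y, q⟫ ≤ ⟪y, v⟫}

def IsExtDef (Q P : Set V) : Prop :=
  IsPolyhedron P ∧ ∀ F : Set V, IsFace P F → ∃ 𝒢 : Set (Set V),
    (∀ G ∈ 𝒢, IsFace Q G) ∧ normCone P F = ⋃ G ∈ 𝒢, normCone Q G

def lineal (C : Set V) : Set V := C ∩ (-C)

def transl (v : V) (C : Set V) : Set V := (fun x => v + x) '' C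

def TightContains (C : Set V) (v : V) (P : Set V) : Prop :=
  P ⊆ transl v C ∧ (P ∩ transl v (lineal C)).Nonempty

set_option linter.unusedSectionVars false

/-! ### Euler characteristic of compact convex sets -/

lemma iv_true {p : Prop} (h : p) : iv p = 1 := by simp [iv, h]

lemma iv_false {p : Prop} (h : ¬ p) : iv p = 0 := by simp [iv, h]

lemma iv_congr {p q : Prop} (h : p ↔ q) : iv p = iv q := by rw [propext h]

lemma iv_and (p q : Prop) : iv (p ∧ q) = iv p * iv q := by
  by_cases hp : p <;> by_cases hq : q <;> simp [iv, hp, hq]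

/-- A compact interval `R` has, at each point `t`, a jump `1_R(t) - 1_R(t + ε)` for small `ε > 0`
that is `1` exactly at its right endpoint. -/
lemma jump_eventually (R : Set ℝ) (hc : IsCompact R) (hconv : Convex ℝ R) (t : ℝ) :
    ∀ᶠ ε in nhdsWithin (0 : ℝ) (Set.Ioi 0),
      iv (t ∈ R) - iv (t + ε ∈ R) = iv (R.Nonempty ∧ t = sSup R) := by
  by_cases hR : R.Nonempty
  swap
  · rw [Set.not_nonempty_iff_eq_empty] at hR
    subst hR
    simp [iv]
  have hd : sSup R ∈ R := hc.sSup_mem hR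
  have hle : ∀ x ∈ R, x ≤ sSup R := fun x hx => le_csSup hc.bddAbove hx
  by_cases ht : t ∈ R
  · rcases (hle t ht).lt_or_eq with hlt | heq
    · filter_upwards [Ioo_mem_nhdsGT (sub_pos.2 hlt)] with ε hε
      have : t + ε ∈ R := hconv.ordConnected.out ht hd ⟨by linarith [hε.1], by linarith [hε.2]⟩
      rw [iv_true ht, iv_true this, iv_false (fun h => hlt.ne h.2)]; rfl
    · filter_upwards [self_mem_nhdsWithin] with ε hε
      have : t + ε ∉ R := fun h => by
        have := hle _ h
        have : (0:ℝ) < ε := hε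
        linarith
      rw [iv_true ht, iv_false this, iv_true ⟨hR, heq⟩]; rfl
  · have h1 : ∀ᶠ ε in nhdsWithin (0 : ℝ) (Set.Ioi 0), t + ε ∉ R := by
      have hopen : Rᶜ ∈ nhds (t + 0) := by
        rw [add_zero]; exact hc.isClosed.isOpen_compl.mem_nhds ht
      have hcont : Filter.Tendsto (fun ε : ℝ => t + ε) (nhdsWithin 0 (Set.Ioi 0)) (nhds (t + 0)) :=
        (Continuous.tendsto (by fun_prop) 0).mono_left nhdsWithin_le_nhds
      exact hcont hopen
    filter_upwards [h1] with ε hε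
    rw [iv_false ht, iv_false hε, iv_false]
    · rfl
    · rintro ⟨_, rfl⟩
      exact ht hd

lemma euler_real {ι : Type*} [Fintype ι] (a : ι → ℤ) (R : ι → Set ℝ)
    (hc : ∀ i, IsCompact (R i)) (hconv : ∀ i, Convex ℝ (R i))
    (h : ∀ x, ∑ i, a i * iv (x ∈ R i) = 0) : ∑ i, a i * iv (R i).Nonempty = 0 := by
  classical
  let T : Finset ℝ := Finset.univ.image fun i => sSup (R i)
  have hev : ∀ᶠ ε in nhdsWithin (0 : ℝ) (Set.Ioi 0), ∀ i, ∀ t ∈ T,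
      iv (t ∈ R i) - iv (t + ε ∈ R i) = iv ((R i).Nonempty ∧ t = sSup (R i)) := by
    rw [Filter.eventually_all]
    intro i
    rw [Filter.eventually_all_finset]
    exact fun t _ => jump_eventually _ (hc i) (hconv i) t
  obtain ⟨ε, hε⟩ := hev.exists
  have key : ∀ i, iv (R i).Nonempty = ∑ t ∈ T, (iv (t ∈ R i) - iv (t + ε ∈ R i)) := by
    intro i
    rw [Finset.sum_congr rfl (hε i), Finset.sum_eq_single (sSup (R i))]
    · exact iv_congr (by simp)
    · intro t _ ht
      exact iv_false fun hh => ht hh.2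
    · intro hh
      exact absurd (Finset.mem_image_of_mem _ (Finset.mem_univ i)) hh
  simp_rw [key, Finset.mul_sum]
  rw [Finset.sum_comm]
  refine Finset.sum_eq_zero fun t _ => ?_
  simp_rw [mul_sub]
  rw [Finset.sum_sub_distrib, h, h, sub_zero]

lemma euler_pi {ι : Type*} [Fintype ι] (a : ι → ℤ) (n : ℕ) : ∀ (R : ι → Set (Fin n → ℝ))
    (_ : ∀ i, IsCompact (R i)) (_ : ∀ i, Convex ℝ (R i))
    (_ : ∀ x, ∑ i, a i * iv (x ∈ R i) = 0), ∑ i, a i * iv (R i).Nonempty = 0 := by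
  induction n with
  | zero =>
    intro R _ _ h
    rw [← h 0]
    refine Finset.sum_congr rfl fun i _ => ?_
    congr 1
    refine iv_congr ⟨?_, fun hx => ⟨_, hx⟩⟩
    rintro ⟨x, hx⟩
    rwa [Subsingleton.elim 0 x]
  | succ n ih =>
    intro R hc hconv h
    let π : (Fin (n + 1) → ℝ) →ₗ[ℝ] (Fin n → ℝ) := LinearMap.funLeft ℝ ℝ Fin.succ
    have hπ : Continuous π := by
      refine continuous_pi fun j => ?_
      exact continuous_apply (Fin.succ j)
    have := ih (fun i => π '' R i) (fun i => (hc i).image hπ) (fun i => (hconv i).linear_image π) ?_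
    · simpa only [Set.image_nonempty] using this
    intro y
    -- The fibre of the projection over `y` is a compact interval.
    let R' : ι → Set ℝ := fun i => {t | (Fin.cons t y : Fin (n + 1) → ℝ) ∈ R i}
    have hcons : Continuous fun t : ℝ => (Fin.cons t y : Fin (n + 1) → ℝ) := by
      refine continuous_pi fun j => ?_
      refine Fin.cases ?_ (fun j => ?_) j
      · simpa using continuous_id'
      · simpa using continuous_const
    have h1 := euler_real a R' ?_ ?_ (fun t => h _)
    · rw [← h1]
      refine Finset.sum_congr rfl fun i _ => ?_
      congr 1
      refine iv_congr ⟨?_, ?_⟩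
      · rintro ⟨x, hx, rfl⟩
        refine ⟨x 0, ?_⟩
        have : (Fin.cons (x 0) (π x) : Fin (n + 1) → ℝ) = x := Fin.cons_self_tail x
        change Fin.cons (x 0) (π x) ∈ R i
        rwa [this]
      · rintro ⟨t, ht⟩
        refine ⟨_, ht, ?_⟩
        ext j
        simp [π, LinearMap.funLeft_apply]
    · intro i
      refine IsCompact.of_isClosed_subset
        ((hc i).image (continuous_apply (0 : Fin (n + 1)))) ((hc i).isClosed.preimage hcons) ?_
      intro t ht
      exact ⟨_, ht, by simp⟩
    · intro i s hs t ht α β hα hβ hαβ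
      have := hconv i hs ht hα hβ hαβ
      change Fin.cons _ _ ∈ R i
      convert this using 1
      ext j
      refine Fin.cases ?_ (fun j => ?_) j
      · simp
      · simp [← add_mul, hαβ]

/-- The Euler characteristic exists: a linear relation between indicator functions of compact convex
sets (possibly empty) also holds between the numbers `[R i ≠ ∅]`. -/
lemma euler_compact {ι : Type*} [Fintype ι] (a : ι → ℤ) (R : ι → Set V)
    (hc : ∀ i, IsCompact (R i)) (hconv : ∀ i, Convex ℝ (R i))
    (h : ∀ x, ∑ i, a i * iv (x ∈ R i) = 0) : ∑ i, a i * iv (R i).Nonempty = 0 := by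
  let e : V ≃L[ℝ] (Fin (Module.finrank ℝ V) → ℝ) :=
    ContinuousLinearEquiv.ofFinrankEq (by simp)
  have := euler_pi a _ (fun i => e '' R i) (fun i => (hc i).image e.continuous)
    (fun i => (hconv i).linear_image e.toLinearEquiv.toLinearMap) ?_
  · simpa only [Set.image_nonempty] using this
  intro y
  rw [← h (e.symm y)]
  refine Finset.sum_congr rfl fun i _ => ?_
  congr 1
  refine iv_congr ⟨?_, fun hx => ⟨_, hx, by simp⟩⟩
  rintro ⟨x, hx, rfl⟩
  simpa using hx

/-- Meeting a fixed closed convex set `K` is valuative on compact convex sets, since multiplying the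
relation by `1_K` gives a relation between the sets `S i ∩ K`. -/
lemma euler_inter {ι : Type*} [Fintype ι] (a : ι → ℤ) (S : ι → Set V)
    (hc : ∀ i, IsCompact (S i)) (hconv : ∀ i, Convex ℝ (S i))
    (h : ∀ x, ∑ i, a i * iv (x ∈ S i) = 0) (K : Set V) (hK : IsClosed K) (hK' : Convex ℝ K) :
    ∑ i, a i * iv (S i ∩ K).Nonempty = 0 := by
  refine euler_compact a _ (fun i => (hc i).inter_right hK) (fun i => (hconv i).inter hK') fun x => ?_
  simp_rw [Set.mem_inter_iff, iv_and, ← mul_assoc]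
  rw [← Finset.sum_mul, h, zero_mul]

/-! ### Meeting a convex set at the top level of a functional -/

lemma slice_eventually (S A : Set V) (hS : Convex ℝ S) (u : V) (c : ℝ)
    (hu : ∀ x ∈ A, ⟪u, x⟫ = c) (δ : ℝ) (hδ : 0 < δ)
    (hdisj : ¬ (S ∩ A).Nonempty → Disjoint S (Metric.cthickening δ A)) :
    ∀ᶠ ε in nhdsWithin (0 : ℝ) (Set.Ioi 0),
      iv ((S ∩ A).Nonempty ∧ ∀ x ∈ S, ⟪u, x⟫ ≤ c) = iv (S ∩ A).Nonempty
        - iv (S ∩ (Metric.cthickening δ A ∩ {x | ⟪u, x⟫ = c + ε})).Nonempty := by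
  by_cases hA : (S ∩ A).Nonempty
  swap
  · refine Filter.Eventually.of_forall fun ε => ?_
    rw [iv_false (fun h => hA h.1), iv_false hA, iv_false]
    · rfl
    · rintro ⟨x, hx, hx', _⟩
      exact Set.disjoint_left.1 (hdisj hA) hx hx'
  by_cases hle : ∀ x ∈ S, ⟪u, x⟫ ≤ c
  · filter_upwards [self_mem_nhdsWithin] with ε hε
    rw [iv_true ⟨hA, hle⟩, iv_true hA, iv_false]
    · rfl
    · rintro ⟨x, hx, _, hx'⟩
      have h1 := hle x hx
      have h2 : ⟪u, x⟫ = c + ε := hx'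
      have h3 : (0:ℝ) < ε := hε
      linarith
  obtain ⟨p, hpS, hpA⟩ := hA
  have hle' := hle
  push Not at hle'
  obtain ⟨x, hxS, hx⟩ := hle'
  have hpos : 0 < ⟪u, x⟫ - c := sub_pos.2 hx
  have hlim : ∀ᶠ ε in nhdsWithin (0 : ℝ) (Set.Ioi 0), ε / (⟪u, x⟫ - c) * ‖x - p‖ < δ := by
    have : Filter.Tendsto (fun ε : ℝ => ε / (⟪u, x⟫ - c) * ‖x - p‖) (nhdsWithin 0 (Set.Ioi 0))
        (nhds (0 / (⟪u, x⟫ - c) * ‖x - p‖)) :=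
      (Continuous.tendsto (by fun_prop) 0).mono_left nhdsWithin_le_nhds
    exact this.eventually_lt_const (by simpa using hδ)
  filter_upwards [hlim, Ioo_mem_nhdsGT hpos] with ε h1 h2
  rw [iv_false (fun h => hle h.2), iv_true ⟨p, hpS, hpA⟩, iv_true]
  · rfl
  -- The segment from `p` to `x` crosses the level `c + ε` within distance `δ` of `p`.
  set t := ε / (⟪u, x⟫ - c) with ht
  have ht0 : 0 ≤ t := div_nonneg h2.1.le hpos.le
  have ht1 : t ≤ 1 := (div_le_one hpos).2 h2.2.le
  refine ⟨p + t • (x - p), hS.add_smul_sub_mem hpS hxS ⟨ht0, ht1⟩, ?_, ?_⟩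
  · refine Metric.mem_cthickening_of_dist_le _ p _ _ hpA ?_
    rw [dist_eq_norm, add_sub_cancel_left, norm_smul, Real.norm_of_nonneg ht0]
    exact h1.le
  · change ⟪u, p + t • (x - p)⟫ = c + ε
    rw [inner_add_right, inner_smul_right, inner_sub_right, hu p hpA, ht,
      div_mul_cancel₀ _ hpos.ne']

lemma top_valuative_compact {ι : Type*} [Fintype ι] (a : ι → ℤ) (S : ι → Set V)
    (hc : ∀ i, IsCompact (S i)) (hconv : ∀ i, Convex ℝ (S i))
    (h : ∀ x, ∑ i, a i * iv (x ∈ S i) = 0) (A : Set V) (hA : IsClosed A) (hA' : Convex ℝ A)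
    (u : V) (c : ℝ) (hu : ∀ x ∈ A, ⟪u, x⟫ = c) :
    ∑ i, a i * iv ((S i ∩ A).Nonempty ∧ ∀ x ∈ S i, ⟪u, x⟫ ≤ c) = 0 := by
  have hδ : ∀ᶠ δ in nhdsWithin (0 : ℝ) (Set.Ioi 0), ∀ i,
      ¬ (S i ∩ A).Nonempty → Disjoint (S i) (Metric.cthickening δ A) := by
    rw [Filter.eventually_all]
    intro i
    by_cases hne : (S i ∩ A).Nonempty
    · exact Filter.Eventually.of_forall fun _ hh => absurd hne hh
    · obtain ⟨δ, hδ, hd⟩ := (Set.disjoint_iff_inter_eq_empty.2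
        (Set.not_nonempty_iff_eq_empty.1 hne)).exists_cthickenings (hc i) hA
      filter_upwards [Ioo_mem_nhdsGT hδ] with δ' hδ' _
      exact hd.mono (Metric.self_subset_cthickening _) (Metric.cthickening_mono hδ'.2.le A)
  obtain ⟨δ, hd, hδ⟩ := (hδ.and self_mem_nhdsWithin).exists
  have hε := Filter.eventually_all.2 fun i =>
    slice_eventually (S i) A (hconv i) u c hu δ hδ (hd i)
  obtain ⟨ε, hε⟩ := hε.exists
  simp_rw [hε, mul_sub]
  rw [Finset.sum_sub_distrib, euler_inter a S hc hconv h A hA hA',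
    euler_inter a S hc hconv h _ (Metric.isClosed_cthickening.inter ?_)
      ((hA'.cthickening δ).inter ?_), sub_zero]
  · exact isClosed_eq (by fun_prop) continuous_const
  · exact convex_hyperplane (innerₗ V u).isLinear _

lemma top_valuative {ι : Type*} [Fintype ι] (a : ι → ℤ) (S : ι → Set V)
    (hc : ∀ i, IsClosed (S i)) (hconv : ∀ i, Convex ℝ (S i))
    (h : ∀ x, ∑ i, a i * iv (x ∈ S i) = 0) (A : Set V) (hA : IsClosed A) (hA' : Convex ℝ A)
    (u : V) (c : ℝ) (hu : ∀ x ∈ A, ⟪u, x⟫ = c) :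
    ∑ i, a i * iv ((S i ∩ A).Nonempty ∧ ∀ x ∈ S i, ⟪u, x⟫ ≤ c) = 0 := by
  have hball : ∀ x : V, ∀ᶠ r : ℝ in Filter.atTop, x ∈ Metric.closedBall (0 : V) r := fun x => by
    filter_upwards [Filter.eventually_ge_atTop ‖x‖] with r hr
    simpa using hr
  -- A large ball contains witnesses for both existential statements about each `S i`.
  have hr : ∀ᶠ r : ℝ in Filter.atTop, ∀ i,
      (((S i ∩ Metric.closedBall 0 r) ∩ A).Nonempty ∧
        ∀ x ∈ S i ∩ Metric.closedBall 0 r, ⟪u, x⟫ ≤ c) ↔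
      ((S i ∩ A).Nonempty ∧ ∀ x ∈ S i, ⟪u, x⟫ ≤ c) := by
    rw [Filter.eventually_all]
    intro i
    have h1 : ∀ᶠ r : ℝ in Filter.atTop,
        (S i ∩ A).Nonempty → ((S i ∩ Metric.closedBall 0 r) ∩ A).Nonempty := by
      by_cases hne : (S i ∩ A).Nonempty
      · obtain ⟨p, hp, hpA⟩ := hne
        filter_upwards [hball p] with r hr _
        exact ⟨p, ⟨hp, hr⟩, hpA⟩
      · exact Filter.Eventually.of_forall fun _ hh => absurd hh hne
    have h2 : ∀ᶠ r : ℝ in Filter.atTop,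
        (∀ x ∈ S i ∩ Metric.closedBall 0 r, ⟪u, x⟫ ≤ c) → ∀ x ∈ S i, ⟪u, x⟫ ≤ c := by
      by_cases hle : ∀ x ∈ S i, ⟪u, x⟫ ≤ c
      · exact Filter.Eventually.of_forall fun _ _ => hle
      · push Not at hle
        obtain ⟨x, hx, hxc⟩ := hle
        filter_upwards [hball x] with r hr hh
        exact absurd (hh x ⟨hx, hr⟩) hxc.not_ge
    filter_upwards [h1, h2] with r h1 h2
    exact ⟨fun hh => ⟨hh.1.mono (by gcongr; exact Set.inter_subset_left), h2 hh.2⟩,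
      fun hh => ⟨h1 hh.1, fun x hx => hh.2 x hx.1⟩⟩
  obtain ⟨r, hr⟩ := hr.exists
  have := top_valuative_compact a (fun i => S i ∩ Metric.closedBall 0 r)
    (fun i => (isCompact_closedBall 0 r).inter_left (hc i))
    (fun i => (hconv i).inter (convex_closedBall 0 r)) ?_ A hA hA' u c hu
  · rw [← this]
    exact Finset.sum_congr rfl fun i _ => by rw [iv_congr (hr i)]
  intro x
  simp_rw [Set.mem_inter_iff, iv_and, ← mul_assoc]
  rw [← Finset.sum_mul, h, zero_mul]

/-! ### Tangent and normal cones of polyhedra -/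

lemma IsPolyhedron.isClosed {P : Set V} (h : IsPolyhedron P) : IsClosed P := by
  obtain ⟨_, s, rfl⟩ := h
  simp only [Set.ofPred_forall]
  exact isClosed_biInter fun p _ => isClosed_le (by fun_prop) continuous_const

lemma IsPolyhedron.convex {P : Set V} (h : IsPolyhedron P) : Convex ℝ P := by
  obtain ⟨_, s, rfl⟩ := h
  simp only [Set.ofPred_forall]
  exact convex_iInter₂ fun p _ => convex_halfSpace_le (innerₗ V p.1).isLinear _

lemma IsFace.convex {Q F : Set V} (hQ : Convex ℝ Q) (hF : IsFace Q F) : Convex ℝ F := by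
  obtain ⟨y, _, rfl⟩ := hF
  intro a ha b hb α β hα hβ hαβ
  refine ⟨hQ ha.1 hb.1 hα hβ hαβ, fun q hq => ?_⟩
  rw [inner_add_right, inner_smul_right, inner_smul_right]
  have h1 := mul_le_mul_of_nonneg_left (ha.2 q hq) hα
  have h2 := mul_le_mul_of_nonneg_left (hb.2 q hq) hβ
  have : ⟪y, q⟫ = α * ⟪y, q⟫ + β * ⟪y, q⟫ := by rw [← add_mul, hαβ, one_mul]
  linarith

/-- A nonempty convex set `F` contained in a polyhedron has a point at which only those defining
inequalities are tight that are tight on all of `F`. -/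
lemma exists_generic_point {F : Set V} (hne : F.Nonempty) (hconv : Convex ℝ F)
    (s : Finset (V × ℝ)) (hs : ∀ x ∈ F, ∀ p ∈ s, ⟪p.1, x⟫ ≤ p.2) :
    ∃ x ∈ F, ∀ p ∈ s, ⟪p.1, x⟫ = p.2 → ∀ f ∈ F, ⟪p.1, f⟫ = p.2 := by
  classical
  induction s using Finset.induction_on with
  | empty =>
    obtain ⟨x, hx⟩ := hne
    exact ⟨x, hx, by simp⟩
  | insert p s _ ih =>
    obtain ⟨x, hx, hxs⟩ := ih fun x hx q hq => hs x hx q (Finset.mem_insert_of_mem hq)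
    by_cases hp : ∀ f ∈ F, ⟪p.1, f⟫ = p.2
    · refine ⟨x, hx, fun q hq => ?_⟩
      rcases Finset.mem_insert.1 hq with rfl | hq
      · exact fun _ => hp
      · exact hxs q hq
    push Not at hp
    obtain ⟨f, hf, hfp⟩ := hp
    have hmid : (1 / 2 : ℝ) • x + (1 / 2 : ℝ) • f ∈ F :=
      hconv hx hf (by norm_num) (by norm_num) (by norm_num)
    refine ⟨_, hmid, fun q hq he => ?_⟩
    rw [inner_add_right, inner_smul_right, inner_smul_right] at he
    have h1 := hs x hx q hq
    have h2 := hs f hf q hq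
    rcases Finset.mem_insert.1 hq with rfl | hq
    · exact absurd (by linarith) hfp
    · exact hxs q hq (by linarith)

/-- The tangent cone of a polyhedron at a face is the polar of the normal cone. -/
lemma mem_tanCone_iff {Q F : Set V} (hQ : IsPolyhedron Q) (hF : IsFace Q F) (d : V) :
    d ∈ tanCone Q F ↔ ∀ n ∈ normCone Q F, ⟪n, d⟫ ≤ 0 := by
  constructor
  · intro hd
    refine hd {d | ∀ n ∈ normCone Q F, ⟪n, d⟫ ≤ 0} ⟨⟨?_, ?_, ?_⟩, ?_⟩
    · intro n _
      simp
    · simp only [Set.ofPred_forall]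
      exact convex_iInter₂ fun n _ => convex_halfSpace_le (innerₗ V n).isLinear _
    · intro c hc x hx n hn
      rw [inner_smul_right]
      exact mul_nonpos_of_nonneg_of_nonpos hc (hx n hn)
    · rintro _ ⟨q, hq, w, hw, rfl⟩ n hn
      rw [inner_sub_right]
      linarith [hn w hw q hq]
  · intro hd
    have hFconv := hF.convex hQ.convex
    have hne : F.Nonempty := by obtain ⟨y, h, _⟩ := hF; exact h
    have hFQ : F ⊆ Q := by obtain ⟨y, _, rfl⟩ := hF; exact fun x hx => hx.1
    obtain ⟨_, s, rfl⟩ := hQ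
    obtain ⟨x, hx, hgen⟩ := exists_generic_point hne hFconv s fun x hx => hFQ hx
    -- A short step from the generic point in direction `d` stays inside the polyhedron.
    have hev : ∀ᶠ ε in nhdsWithin (0 : ℝ) (Set.Ioi 0), ∀ p ∈ s, ⟪p.1, x + ε • d⟫ ≤ p.2 := by
      rw [Filter.eventually_all_finset]
      intro p hp
      rcases (hFQ hx p hp).lt_or_eq with hlt | heq
      · have : Filter.Tendsto (fun ε : ℝ => ⟪p.1, x + ε • d⟫) (nhdsWithin 0 (Set.Ioi 0))
            (nhds ⟪p.1, x + (0 : ℝ) • d⟫) :=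
          (Continuous.tendsto (by fun_prop) 0).mono_left nhdsWithin_le_nhds
        filter_upwards [this.eventually_lt_const (by simpa using hlt)] with ε hε
        exact hε.le
      · have hn : p.1 ∈ normCone {x | ∀ p ∈ s, ⟪p.1, x⟫ ≤ p.2} F := fun w hw q hq => by
          rw [hgen p hp heq w hw]
          exact hq p hp
        filter_upwards [self_mem_nhdsWithin] with ε hε
        rw [inner_add_right, inner_smul_right, heq]
        have := mul_nonpos_of_nonneg_of_nonpos (le_of_lt (Set.mem_Ioi.1 hε)) (hd _ hn)
        linarith
    obtain ⟨ε, hε, hpos⟩ := (hev.and self_mem_nhdsWithin).exists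
    have hpos : 0 < ε := hpos
    rintro C ⟨⟨_, _, hC⟩, hsub⟩
    have := hC ε⁻¹ (inv_nonneg.2 hpos.le) _ (hsub ⟨x + ε • d, hε, x, hx, rfl⟩)
    rwa [add_sub_cancel_left, smul_smul, inv_mul_cancel₀ hpos.ne', one_smul] at this

lemma mem_transl_iff {v x : V} {C : Set V} : x ∈ transl v C ↔ x - v ∈ C := by
  constructor
  · rintro ⟨c, hc, rfl⟩
    simpa using hc
  · intro h
    exact ⟨_, h, by simp⟩

lemma mem_transl_lineal_iff {Q F : Set V} (hQ : IsPolyhedron Q) (hF : IsFace Q F) (v x : V) :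
    x ∈ transl v (lineal (tanCone Q F)) ↔ ∀ n ∈ normCone Q F, ⟪n, x⟫ = ⟪n, v⟫ := by
  rw [mem_transl_iff, lineal, Set.mem_inter_iff, Set.mem_neg, mem_tanCone_iff hQ hF,
    mem_tanCone_iff hQ hF]
  simp only [inner_neg_right, inner_sub_right]
  constructor
  · rintro ⟨h1, h2⟩ n hn
    linarith [h1 n hn, h2 n hn]
  · intro h
    constructor <;> intro n hn <;> linarith [h n hn]

/-- For extended deformations of `Q`, containment in `v + C` need only be tested on one vector `y`
exposing the face `F`, once `P` meets `v + lineal C`. -/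
lemma tightContains_iff {Q F P : Set V} (hQ : IsPolyhedron Q) (hF : IsFace Q F) (v y : V)
    (hy : F = {x | x ∈ Q ∧ ∀ q ∈ Q, ⟪y, q⟫ ≤ ⟪y, x⟫}) (hP : IsExtDef Q P) :
    TightContains (tanCone Q F) v P ↔
      (P ∩ transl v (lineal (tanCone Q F))).Nonempty ∧ ∀ x ∈ P, ⟪y, x⟫ ≤ ⟪y, v⟫ := by
  have hyN : y ∈ normCone Q F := by
    intro w hw q hq
    rw [hy] at hw
    exact hw.2 q hq
  constructor
  · rintro ⟨h1, h2⟩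
    refine ⟨h2, fun x hx => ?_⟩
    have := (mem_tanCone_iff hQ hF _).1 (mem_transl_iff.1 (h1 hx)) y hyN
    rw [inner_sub_right] at this
    linarith
  · rintro ⟨h2, hle⟩
    refine ⟨?_, h2⟩
    obtain ⟨p, hpP, hp⟩ := h2
    rw [mem_transl_lineal_iff hQ hF] at hp
    have hpG : p ∈ {x | x ∈ P ∧ ∀ q ∈ P, ⟪y, q⟫ ≤ ⟪y, x⟫} :=
      ⟨hpP, fun q hq => by rw [hp y hyN]; exact hle q hq⟩
    obtain ⟨𝒢, h𝒢, hN⟩ := hP.2 _ ⟨y, ⟨p, hpG⟩, rfl⟩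
    have hyG : y ∈ normCone P {x | x ∈ P ∧ ∀ q ∈ P, ⟪y, q⟫ ≤ ⟪y, x⟫} :=
      fun w hw q hq => hw.2 q hq
    rw [hN] at hyG
    simp only [Set.mem_iUnion] at hyG
    obtain ⟨G, hG, hyG⟩ := hyG
    -- Points of `G` maximize `y` over `Q`, so `G ⊆ F`.
    have hGF : G ⊆ F := by
      intro g hg
      rw [hy]
      refine ⟨?_, fun q hq => hyG g hg q hq⟩
      obtain ⟨z, _, rfl⟩ := h𝒢 G hG
      exact hg.1
    intro x hx
    rw [mem_transl_iff, mem_tanCone_iff hQ hF]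
    intro n hn
    have hn' : n ∈ ⋃ G ∈ 𝒢, normCone Q G := by
      simp only [Set.mem_iUnion]
      exact ⟨G, hG, fun w hw => hn w (hGF hw)⟩
    rw [← hN] at hn'
    have := hn' p hpG x hx
    rw [inner_sub_right, ← hp n hn]
    linarith

/-- the tight containment indicator function of a translated tangent cone
is valuative on the family of extended deformations of `Q`. -/
theorem tight_containment_valuative (Q : Set V) (hQ : IsPolyhedron Q)
    (F : Set V) (hF : IsFace Q F) (v : V) :
    Valuative {P : Set V | IsExtDef Q P}
      (fun P => iv (TightContains (tanCone Q F) v P)) := by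
  obtain ⟨y, -, hy⟩ := id hF
  intro k a P hP hsum
  have hyN : y ∈ normCone Q F := by
    intro w hw q hq
    rw [hy] at hw
    exact hw.2 q hq
  have hA : transl v (lineal (tanCone Q F)) = {x | ∀ n ∈ normCone Q F, ⟪n, x⟫ = ⟪n, v⟫} :=
    Set.ext fun x => mem_transl_lineal_iff hQ hF v x
  have h := top_valuative a P (fun i => (hP i).1.isClosed) (fun i => (hP i).1.convex) ?_
    (transl v (lineal (tanCone Q F))) ?_ ?_ y ⟪y, v⟫
    (fun x hx => (mem_transl_lineal_iff hQ hF v x).1 hx y hyN)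
  · rw [← h]
    refine Finset.sum_congr rfl fun i _ => ?_
    beta_reduce
    rw [smul_eq_mul, iv_congr (tightContains_iff hQ hF v y hy (hP i))]
  · intro x
    have hx := congrFun hsum x
    rw [Finset.sum_apply] at hx
    refine Eq.trans (Finset.sum_congr rfl fun i _ => ?_) hx
    by_cases hm : x ∈ P i <;> simp [iv, indic, hm]
  · rw [hA]
    simp only [Set.ofPred_forall]
    exact isClosed_biInter fun n _ => isClosed_eq (by fun_prop) continuous_const
  · rw [hA]
    simp only [Set.ofPred_forall]
    exact convex_iInter₂ fun n _ => convex_hyperplane (innerₗ V n).isLinear _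
end

section
/- Let Q be a polyhedron in V and P ∈ Def⁺(Q) an extended deformation of Q. Then there are only finitely many sets of the form C_F(Q) + v (F a face of Q, v ∈ V, counted as distinct subsets of V) that tightly contain P. -/
/-!
For a fixed face `F` of `Q`, put `C = tanCone Q F`. If `C + v` and `C + w` both tightly contain `P`,
choose `q ∈ P ∩ (lineal C + w)`. Since `q` also lies in `C + v`, it follows that `w - v ∈ C`, that
is, `C + w ⊆ C + v`, and the reverse inclusion holds by symmetry. So each face contributes at most
one translate (`transl_subset_of_tight`).

It remains to see that a polyhedron has finitely many faces (`finite_faces`). A face is determined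
by the set of defining inequalities that are equalities on all of it: if `x` is a point of `F` at
which no further inequality is tight (`exists_generic_point`) and `g ∈ Q` satisfies the equalities
valid on `F`, then `x + ε (x - g) ∈ Q` for small `ε > 0`, so a functional maximized at `x` over `Q`
is also maximized at `g` (`face_subset_of_tight`).
-/

open RealInnerProductSpace

variable {V : Type*} [NormedAddCommGroup V] [InnerProductSpace ℝ V] [FiniteDimensional ℝ V]

lemma isConvexCone_coneGen (S : Set V) : IsConvexCone (coneGen S) := by
  refine ⟨?_, ?_, ?_⟩
  · rintro C ⟨hC, -⟩
    exact hC.1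
  · exact convex_sInter fun C hC => hC.1.2.1
  · intro c hc x hx C hC
    exact hC.1.2.2 c hc x (hx C hC)

lemma IsConvexCone.add_mem {C : Set V} (hC : IsConvexCone C) {x y : V} (hx : x ∈ C) (hy : y ∈ C) :
    x + y ∈ C := by
  have h := hC.2.2 2 (by norm_num) _
    (hC.2.1 hx hy (by norm_num : (0 : ℝ) ≤ 1 / 2) (by norm_num : (0 : ℝ) ≤ 1 / 2) (by norm_num))
  rw [← smul_add, smul_smul] at h
  norm_num at h
  exact h

/-- A point `q = w + l ∈ P` with `l ∈ lineal C` is also `v + c` with `c ∈ C`, so `w - v = c - l ∈ C`;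
exchanging `v` and `w` gives equality of the two translates. -/
lemma transl_subset_of_tight {C P : Set V} (hC : IsConvexCone C) {v w : V}
    (hv : TightContains C v P) (hw : TightContains C w P) : transl w C ⊆ transl v C := by
  obtain ⟨q, hqP, l, hl, rfl⟩ := hw.2
  obtain ⟨c, hc, hcq⟩ := hv.1 hqP
  rintro _ ⟨d, hd, rfl⟩
  refine ⟨c + -l + d, hC.add_mem (hC.add_mem hc hl.2) hd, ?_⟩
  have hcq' : v + c = w + l := hcq
  change v + (c + -l + d) = w + d
  rw [← add_assoc, ← add_assoc, hcq']
  abel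

lemma IsFace.subset {Q F : Set V} (hF : IsFace Q F) : F ⊆ Q := by
  obtain ⟨y, -, rfl⟩ := hF
  exact fun x hx => hx.1

lemma IsFace.midpoint_mem {Q F : Set V} (hQ : Convex ℝ Q) (hF : IsFace Q F) {x z : V}
    (hx : x ∈ F) (hz : z ∈ F) : (1 / 2 : ℝ) • x + (1 / 2 : ℝ) • z ∈ F := by
  obtain ⟨y, -, rfl⟩ := hF
  refine ⟨hQ hx.1 hz.1 (by norm_num) (by norm_num) (by norm_num), fun q hq => ?_⟩
  have h1 := hx.2 q hq
  have h2 := hz.2 q hq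
  rw [inner_add_right, inner_smul_right, inner_smul_right]
  linarith

lemma convex_halfspaces (s : Finset (V × ℝ)) : Convex ℝ {x : V | ∀ p ∈ s, ⟪p.1, x⟫ ≤ p.2} := by
  intro x hx z hz a b ha hb hab p hp
  have h1 := mul_le_mul_of_nonneg_left (hx p hp) ha
  have h2 := mul_le_mul_of_nonneg_left (hz p hp) hb
  have h3 : p.2 = a * p.2 + b * p.2 := by rw [← add_mul, hab, one_mul]
  rw [inner_add_right, inner_smul_right, inner_smul_right]
  linarith

/-- A face contains a point at which every inequality in `t` that is strict somewhere on the face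
is strict; it is obtained by repeatedly taking midpoints. -/
lemma exists_generic_point_s8 {s : Finset (V × ℝ)} {F : Set V}
    (hF : IsFace {x : V | ∀ p ∈ s, ⟪p.1, x⟫ ≤ p.2} F) (t : Finset (V × ℝ)) (hts : t ⊆ s) :
    ∃ x ∈ F, ∀ p ∈ t, (∃ z ∈ F, ⟪p.1, z⟫ < p.2) → ⟪p.1, x⟫ < p.2 := by
  classical
  induction t using Finset.induction_on with
  | empty =>
    obtain ⟨y, ⟨x, hx⟩, -⟩ := id hF
    exact ⟨x, hx, by simp⟩
  | insert a t _ ih =>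
    obtain ⟨x, hx, hxt⟩ := ih fun p hp => hts (Finset.mem_insert_of_mem hp)
    by_cases ha : ∃ z ∈ F, ⟪a.1, z⟫ < a.2
    · obtain ⟨z, hz, hza⟩ := ha
      refine ⟨_, hF.midpoint_mem (convex_halfspaces s) hx hz, fun p hp hex => ?_⟩
      rw [inner_add_right, inner_smul_right, inner_smul_right]
      have h1 := hF.subset hx p (hts hp)
      have h2 := hF.subset hz p (hts hp)
      rcases Finset.mem_insert.1 hp with rfl | hp
      · linarith
      · have := hxt p hp hex
        linarith
    · refine ⟨x, hx, fun p hp hex => ?_⟩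
      rcases Finset.mem_insert.1 hp with rfl | hp
      · exact absurd hex ha
      · exact hxt p hp hex

lemma face_subset_of_tight {s : Finset (V × ℝ)} {F G : Set V}
    (hF : IsFace {x : V | ∀ p ∈ s, ⟪p.1, x⟫ ≤ p.2} F)
    (hG : IsFace {x : V | ∀ p ∈ s, ⟪p.1, x⟫ ≤ p.2} G)
    (h : ∀ p ∈ s, (∀ x ∈ F, ⟪p.1, x⟫ = p.2) → ∀ x ∈ G, ⟪p.1, x⟫ = p.2) : G ⊆ F := by
  intro g hg
  obtain ⟨x, hx, hxs⟩ := exists_generic_point_s8 hF s subset_rfl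
  have hxQ := hF.subset hx
  have hgQ := hG.subset hg
  have hev : ∀ᶠ ε : ℝ in nhdsWithin 0 (Set.Ioi 0), ∀ p ∈ s, ⟪p.1, x + ε • (x - g)⟫ ≤ p.2 := by
    rw [Filter.eventually_all_finset]
    intro p hp
    by_cases hex : ∃ z ∈ F, ⟪p.1, z⟫ < p.2
    · have hcont : Continuous fun ε : ℝ => ⟪p.1, x + ε • (x - g)⟫ := by fun_prop
      have h0 : ⟪p.1, x + (0 : ℝ) • (x - g)⟫ < p.2 := by simpa using hxs p hp hex
      exact ((hcont.continuousAt.eventually_lt continuousAt_const h0).filter_mono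
        nhdsWithin_le_nhds).mono fun ε hε => hε.le
    · push Not at hex
      have heq : ∀ z ∈ F, ⟪p.1, z⟫ = p.2 := fun z hz =>
        le_antisymm (hF.subset hz p hp) (hex z hz)
      refine Filter.Eventually.of_forall fun ε => ?_
      rw [inner_add_right, inner_smul_right, inner_sub_right, heq x hx, h p hp heq g hg]
      simp
  obtain ⟨ε, hε, hε0⟩ := (hev.and self_mem_nhdsWithin).exists
  have hε0' : 0 < ε := hε0
  obtain ⟨y, -, rfl⟩ := hF
  have hle := hx.2 _ hε
  rw [inner_add_right, inner_smul_right, inner_sub_right] at hle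
  have hxg : ⟪y, x⟫ ≤ ⟪y, g⟫ := by
    by_contra! hlt
    have := mul_pos hε0' (sub_pos.2 hlt)
    linarith
  exact ⟨hgQ, fun q hq => (hx.2 q hq).trans hxg⟩

lemma finite_faces {Q : Set V} (hQ : IsPolyhedron Q) : {F : Set V | IsFace Q F}.Finite := by
  classical
  obtain ⟨-, s, rfl⟩ := hQ
  refine Set.Finite.of_finite_image
    (f := fun F : Set V => s.filter fun p => ∀ x ∈ F, ⟪p.1, x⟫ = p.2) ?_ ?_
  · refine s.powerset.finite_toSet.subset ?_
    rintro _ ⟨F, -, rfl⟩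
    exact Finset.mem_coe.2 (Finset.mem_powerset.2 (Finset.filter_subset _ _))
  · intro F hF G hG hFG
    have key : ∀ p ∈ s, (∀ x ∈ F, ⟪p.1, x⟫ = p.2) ↔ ∀ x ∈ G, ⟪p.1, x⟫ = p.2 :=
      Finset.filter_inj'.1 hFG
    exact Set.Subset.antisymm (face_subset_of_tight hG hF fun p hp => (key p hp).2)
      (face_subset_of_tight hF hG fun p hp => (key p hp).1)

/-- only finitely many translates of tangent cones of `Q` (as subsets of `V`)
tightly contain a given extended deformation `P` of `Q`. -/
theorem finitely_many_tight_containments (Q : Set V) (hQ : IsPolyhedron Q)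
    (P : Set V) (hP : IsExtDef Q P) :
    {T : Set V | ∃ F v, IsFace Q F ∧ T = transl v (tanCone Q F) ∧
      TightContains (tanCone Q F) v P}.Finite := by
  have hfin : (⋃ F ∈ {F : Set V | IsFace Q F}, {T : Set V | ∃ v, T = transl v (tanCone Q F) ∧
      TightContains (tanCone Q F) v P}).Finite := by
    refine (finite_faces hQ).biUnion fun F _ => Set.Subsingleton.finite ?_
    rintro _ ⟨v, rfl, hv⟩ _ ⟨w, rfl, hw⟩
    have hC : IsConvexCone (tanCone Q F) := isConvexCone_coneGen _
    exact Set.Subset.antisymm (transl_subset_of_tight hC hw hv) (transl_subset_of_tight hC hv hw)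
  refine hfin.subset ?_
  rintro T ⟨F, v, hF, hT, hv⟩
  exact Set.mem_biUnion (show F ∈ {F : Set V | IsFace Q F} from hF) ⟨v, hT, hv⟩
end
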